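/- Every finite extensive-form game with perfect recall possesses a subgame perfect semi-sequential equilibrium: there exist a behavioral strategy profile β* and a belief system μ* forming a subgame perfect semi-sequential equilibrium. -/

import Mathlib

open scoped Classical

noncomputable section

/-- A finite extensive-form game.  Actions are labelled by natural numbers drawn from the
finite pool `actFinset`; a history is the list of actions taken so far; players are `Fin n`
and `P h = none` means that the chance player moves after `h`.  The information sets of
player `i` are `Info i j` for `j < m i`, and `infoIdx h` is the index of the information
set containing a nonterminal history `h` at which some player moves.  Payoffs `u i h` are
relevant on terminal histories. -/
structure EFG where
  n : ℕ
  actFinset : Finset ℕ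
  H : Finset (List ℕ)
  P : List ℕ → Option (Fin n)
  fc : List ℕ → ℕ → ℝ
  m : Fin n → ℕ
  Info : Fin n → ℕ → Finset (List ℕ)
  infoIdx : List ℕ → ℕ
  u : Fin n → List ℕ → ℝ
  empty_mem : ([] : List ℕ) ∈ H
  prefixClosed : ∀ h ∈ H, ∀ h' : List ℕ, h' <+: h → h' ∈ H
  act_mem : ∀ (h : List ℕ) (a : ℕ), h ++ [a] ∈ H → a ∈ actFinset
  fc_nonneg : ∀ h a, 0 ≤ fc h a
  fc_sum : ∀ h ∈ H, P h = none → (∃ a, h ++ [a] ∈ H) →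
    ∑ a ∈ actFinset.filter (fun a => h ++ [a] ∈ H), fc h a = 1
  info_spec : ∀ (i : Fin n) (j : ℕ) (h : List ℕ), j < m i →
    (h ∈ Info i j ↔ h ∈ H ∧ P h = some i ∧ (∃ a, h ++ [a] ∈ H) ∧ infoIdx h = j)
  infoIdx_lt : ∀ (i : Fin n), ∀ h ∈ H, P h = some i → (∃ a, h ++ [a] ∈ H) → infoIdx h < m i
  info_nonempty : ∀ (i : Fin n) (j : ℕ), j < m i → (Info i j).Nonempty
  info_actions : ∀ (i : Fin n) (j : ℕ), j < m i → ∀ h ∈ Info i j, ∀ h' ∈ Info i j,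
    ∀ a : ℕ, (h ++ [a] ∈ H ↔ h' ++ [a] ∈ H)
  act_unique : ∀ (h h' : List ℕ) (a : ℕ), h ∈ H → h' ∈ H → h ++ [a] ∈ H → h' ++ [a] ∈ H →
    P h = P h' ∧ infoIdx h = infoIdx h'

namespace EFG

/-- Behavioral strategy profiles (player, information-set index, action ↦ probability). -/
abbrev Profile (G : EFG) : Type := Fin G.n → ℕ → ℕ → ℝ

/-- Belief systems (player, information-set index, history ↦ probability). -/
abbrev Belief (G : EFG) : Type := Fin G.n → ℕ → List ℕ → ℝ

variable (G : EFG)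

/-- The set `Z` of terminal histories. -/
def Zset : Finset (List ℕ) := G.H.filter fun h => ∀ a : ℕ, h ++ [a] ∉ G.H

/-- The set `A(h)` of actions available after a history. -/
def A (h : List ℕ) : Finset ℕ := G.actFinset.filter fun a => h ++ [a] ∈ G.H

/-- The common action set `A(I_i^j)` of an information set. -/
def infoA (i : Fin G.n) (j : ℕ) : Finset ℕ := (G.Info i j).sup fun h => G.A h

/-- A behavioral strategy of player `i`: a probability distribution on `A(I_i^j)` for
each information set `I_i^j`. -/
def IsBehStrategy (i : Fin G.n) (b : ℕ → ℕ → ℝ) : Prop :=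
  ∀ j < G.m i, (∀ a ∈ G.infoA i j, 0 ≤ b j a) ∧ ∑ a ∈ G.infoA i j, b j a = 1

/-- A behavioral strategy profile. -/
def IsBehProfile (β : G.Profile) : Prop := ∀ i : Fin G.n, G.IsBehStrategy i (β i)

/-- The probability of action `a` at history `h`: the chance distribution if the chance
player moves, and the mover's behavioral strategy otherwise. -/
def moveProb (β : G.Profile) (h : List ℕ) (a : ℕ) : ℝ :=
  (G.P h).elim (G.fc h a) fun i => β i (G.infoIdx h) a

/-- Player `i`'s record `X_i` of the information sets he encounters along a history and the
actions he takes at them, accumulated starting from the prefix `pre`. -/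
def recordFrom (i : Fin G.n) : List ℕ → List ℕ → List (ℕ × ℕ)
  | _, [] => []
  | pre, b :: rest =>
    (if G.P pre = some i then [(G.infoIdx pre, b)] else []) ++ recordFrom i (pre ++ [b]) rest

/-- Perfect recall. -/
def PerfectRecall : Prop :=
  ∀ (i : Fin G.n) (j : ℕ), j < G.m i →
    ∀ h ∈ G.Info i j, ∀ h' ∈ G.Info i j, G.recordFrom i [] h = G.recordFrom i [] h'

/-- Product of the move probabilities along `rest`, continuing from the prefix `pre`. -/
def prodAlong (β : G.Profile) : List ℕ → List ℕ → ℝ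
  | _, [] => 1
  | pre, b :: rest => G.moveProb β pre b * prodAlong β (pre ++ [b]) rest

/-- `ω(h|β)`: the probability that the moves along `h` are played under `β`. -/
def omega (β : G.Profile) (h : List ℕ) : ℝ := G.prodAlong β [] h

/-- `ω(I_i^j|β)`. -/
def omegaInfo (i : Fin G.n) (j : ℕ) (β : G.Profile) : ℝ := ∑ h ∈ G.Info i j, G.omega β h

/-- Product of the move probabilities along `rest` from `pre`, disregarding player `i`'s
own moves. -/
def prodAlongNot (i : Fin G.n) (β : G.Profile) : List ℕ → List ℕ → ℝ
  | _, [] => 1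
  | pre, b :: rest =>
    (if G.P pre = some i then 1 else G.moveProb β pre b) * prodAlongNot i β (pre ++ [b]) rest

/-- `S^i(h|β)`: probability of the moves along `h`, disregarding player `i`'s own moves. -/
def Sh (i : Fin G.n) (β : G.Profile) (h : List ℕ) : ℝ := G.prodAlongNot i β [] h

/-- `S^i(I_i^j|β)`. -/
def SInfo (i : Fin G.n) (j : ℕ) (β : G.Profile) : ℝ := ∑ h ∈ G.Info i j, G.Sh i β h

/-- Product of the move probabilities along `rest` from `pre`, with the factor at prefixes
lying in `I_i^j` omitted. -/
def prodAlongSkip (i : Fin G.n) (j : ℕ) (β : G.Profile) : List ℕ → List ℕ → ℝ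
  | _, [] => 1
  | pre, b :: rest =>
    (if pre ∈ G.Info i j then 1 else G.moveProb β pre b) * prodAlongSkip i j β (pre ++ [b]) rest

/-- `q ∈ M(a, I_i^j)`: `I_i^q` is a first information set of player `i` after action `a`
(every history in `I_i^q` contains `a`, with no later action of `a` lying in any action set
of player `i`). -/
def FirstAfter (i : Fin G.n) (a : ℕ) (q : ℕ) : Prop :=
  q < G.m i ∧ ∀ h ∈ G.Info i q, ∃ l₁ l₂ : List ℕ,
    h = l₁ ++ a :: l₂ ∧ ∀ b ∈ l₂, ∀ p < G.m i, b ∉ G.infoA i p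

/-- `q ∈ M(I_i^j) = ∪_{a ∈ A(I_i^j)} M(a, I_i^j)`. -/
def MInfo (i : Fin G.n) (j : ℕ) (q : ℕ) : Prop := ∃ a ∈ G.infoA i j, G.FirstAfter i a q

/-- `q ∈ Λ(a, I_i^j)`: every history in `I_i^q` contains the action `a`. -/
def LambdaSet (i : Fin G.n) (a : ℕ) (q : ℕ) : Prop :=
  q < G.m i ∧ ∀ h ∈ G.Info i q, ∃ l₁ l₂ : List ℕ, h = l₁ ++ a :: l₂

/-- `ϱ^i_{I_i^j}(β, β̃)`: replace player `i`'s component of `β` by that of `β̃` at every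
information set `I_i^q` such that some history in `I_i^q` contains an action of `A(I_i^j)`. -/
def rho (i : Fin G.n) (j : ℕ) (β βt : G.Profile) : G.Profile := fun p q =>
  if p = i ∧ ∃ h ∈ G.Info i q, ∃ b ∈ h, b ∈ G.infoA i j then βt i q else β p q

/-- A belief system: a probability distribution on each information set. -/
def IsBelief (μ : G.Belief) : Prop :=
  ∀ (i : Fin G.n) (j : ℕ), j < G.m i →
    (∀ h ∈ G.Info i j, 0 ≤ μ i j h) ∧ ∑ h ∈ G.Info i j, μ i j h = 1

/-- A self-independent belief system for `β`:
`S^i(I_i^j|β) · μ^i_{I_i^j}(h) = S^i(h|β)`. -/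
def SelfIndep (β : G.Profile) (μ : G.Belief) : Prop :=
  ∀ (i : Fin G.n) (j : ℕ), j < G.m i → ∀ h ∈ G.Info i j,
    G.SInfo i j β * μ i j h = G.Sh i β h

/-- Auxiliary for `ν`: scan `rest` from `pre` for the subhistory lying in `I_i^j`, then
weight by the belief and multiply the move probabilities of the remaining moves (the move
taken at the subhistory itself being skipped). -/
def nuAux (i : Fin G.n) (j : ℕ) (β : G.Profile) (w : List ℕ → ℝ) : List ℕ → List ℕ → ℝ
  | _, [] => 0
  | pre, b :: rest =>
    if pre ∈ G.Info i j then w pre * G.prodAlong β (pre ++ [b]) rest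
    else nuAux i j β w (pre ++ [b]) rest

/-- `ν^i_{I_i^j}(h | a, β^{-I_i^j}, μ)` (it does not involve the component of `β` at
`I_i^j`). -/
def nu (i : Fin G.n) (j : ℕ) (β : G.Profile) (μ : G.Belief) (h : List ℕ) : ℝ :=
  G.nuAux i j β (μ i j) [] h

/-- `u^i((a, β^{-I_i^j}) ∧ I_i^j)`. -/
def uWedgeAct (i : Fin G.n) (j : ℕ) (a : ℕ) (β : G.Profile) : ℝ :=
  ∑ h ∈ G.Zset.filter (fun h => a ∈ h), G.u i h * G.prodAlongSkip i j β [] h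

/-- `u^i(β ∧ I_i^j)`. -/
def uWedge (i : Fin G.n) (j : ℕ) (β : G.Profile) : ℝ :=
  ∑ h ∈ G.Zset.filter (fun h => ∃ b ∈ h, b ∈ G.infoA i j), G.u i h * G.omega β h

/-- The conditional expected payoff `u^i(a, β^{-I_i^j}, μ | I_i^j)`. -/
def uCond (i : Fin G.n) (j : ℕ) (a : ℕ) (β : G.Profile) (μ : G.Belief) : ℝ :=
  ∑ h ∈ G.Zset.filter (fun h => a ∈ h), G.u i h * G.nu i j β μ h

/-- The expected payoff `u^i(β)`. -/
def uExp (i : Fin G.n) (β : G.Profile) : ℝ := ∑ h ∈ G.Zset, G.u i h * G.omega β h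

/-- The profile obtained from `β` by replacing all of player `i`'s components by `b`. -/
def replace (β : G.Profile) (i : Fin G.n) (b : ℕ → ℕ → ℝ) : G.Profile :=
  fun p => if p = i then b else β p

/-- `β` is a Nash equilibrium in behavioral strategies. -/
def IsNash (β : G.Profile) : Prop :=
  G.IsBehProfile β ∧ ∀ (i : Fin G.n) (b : ℕ → ℕ → ℝ), G.IsBehStrategy i b →
    G.uExp i (G.replace β i b) ≤ G.uExp i β

/-- `(β, β̃, μ)` satisfies the Nash characterization (Definition 2 of the paper). -/
def NashChar (β βt : G.Profile) (μ : G.Belief) : Prop :=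
  (∀ (i : Fin G.n) (j : ℕ), j < G.m i → ∀ a' ∈ G.infoA i j, ∀ a'' ∈ G.infoA i j,
    G.uWedgeAct i j a' (G.rho i j β βt) < G.uWedgeAct i j a'' (G.rho i j β βt) →
    β i j a' = 0) ∧
  (∀ (i : Fin G.n) (j : ℕ), j < G.m i → ∀ a' ∈ G.infoA i j, ∀ a'' ∈ G.infoA i j,
    G.uCond i j a' (G.rho i j β βt) μ < G.uCond i j a'' (G.rho i j β βt) μ →
    βt i j a' = 0) ∧
  G.IsBelief μ ∧ G.SelfIndep β μ

/-- `r` is the root of a subgame: every information set lies entirely inside or entirely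
outside the set of histories extending `r`. -/
def IsSubgameRoot (r : List ℕ) : Prop :=
  r ∈ G.H ∧ ∀ (i : Fin G.n) (j : ℕ), j < G.m i →
    (∀ h ∈ G.Info i j, r <+: h) ∨ ∀ h ∈ G.Info i j, ¬ r <+: h

/-- The depth `g` of the smallest subgame containing `A(I_i^j)` (the length of the longest
subgame root preceding every history of `I_i^j`). -/
def sgDepthInfo (i : Fin G.n) (j : ℕ) : ℕ :=
  (G.H.filter fun r => G.IsSubgameRoot r ∧ ∀ h ∈ G.Info i j, r <+: h).sup List.length

/-- The depth `q(h)` of the smallest subgame containing the last action of `h`. -/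
def sgDepthHist (h : List ℕ) : ℕ :=
  (G.H.filter fun r => G.IsSubgameRoot r ∧ r <+: h.dropLast).sup List.length

/-- `C^i_{I_i^j}(h|β)`: product of move probabilities along `h` within the smallest subgame
containing `A(I_i^j)`. -/
def Ch (i : Fin G.n) (j : ℕ) (β : G.Profile) (h : List ℕ) : ℝ :=
  G.prodAlong β (h.take (G.sgDepthInfo i j)) (h.drop (G.sgDepthInfo i j))

/-- `C^i_{I_i^j}(I_i^j|β)`. -/
def CInfo (i : Fin G.n) (j : ℕ) (β : G.Profile) : ℝ := ∑ h ∈ G.Info i j, G.Ch i j β h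

/-- `u^i((a, β^{-I_i^j}) ⋄ I_i^j)`. -/
def uDiamondAct (i : Fin G.n) (j : ℕ) (a : ℕ) (β : G.Profile) : ℝ :=
  ∑ h ∈ G.Zset.filter (fun h => a ∈ h), G.u i h *
    G.prodAlongSkip i j β (h.take (G.sgDepthInfo i j)) (h.drop (G.sgDepthInfo i j))

/-- `Y^i(h|β)`: like `S^i(h|β)` but within the smallest subgame containing the last action
of `h`. -/
def Yh (i : Fin G.n) (β : G.Profile) (h : List ℕ) : ℝ :=
  G.prodAlongNot i β (h.take (G.sgDepthHist h)) (h.drop (G.sgDepthHist h))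

/-- `Y^i(I_i^j|β)`. -/
def YInfo (i : Fin G.n) (j : ℕ) (β : G.Profile) : ℝ := ∑ h ∈ G.Info i j, G.Yh i β h

/-- The belief condition `Y^i(I_i^j|β) · μ^i_{I_i^j}(h) = Y^i(h|β)`. -/
def YConsistent (β : G.Profile) (μ : G.Belief) : Prop :=
  ∀ (i : Fin G.n) (j : ℕ), j < G.m i → ∀ h ∈ G.Info i j,
    G.YInfo i j β * μ i j h = G.Yh i β h

/-- The expected payoff of player `i` in the subgame rooted at `r` (payoffs of terminal
histories extending `r`, weighted by the move probabilities within the subgame). -/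
def uExpFrom (i : Fin G.n) (β : G.Profile) (r : List ℕ) : ℝ :=
  ∑ h ∈ G.Zset.filter (fun h => r <+: h), G.u i h * G.prodAlong β r (h.drop r.length)

/-- `β` is a subgame perfect equilibrium in behavioral strategies: its restriction to every
subgame is a Nash equilibrium in behavioral strategies of that subgame. -/
def IsSubgamePerfect (β : G.Profile) : Prop :=
  G.IsBehProfile β ∧ ∀ r : List ℕ, G.IsSubgameRoot r →
    ∀ (i : Fin G.n) (b : ℕ → ℕ → ℝ), G.IsBehStrategy i b →
      G.uExpFrom i (G.replace β i b) r ≤ G.uExpFrom i β r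

/-- `(β, β̃, μ)` satisfies the subgame perfect characterization (Definition 6 of the
paper). -/
def SubgameChar (β βt : G.Profile) (μ : G.Belief) : Prop :=
  (∀ (i : Fin G.n) (j : ℕ), j < G.m i → ∀ a' ∈ G.infoA i j, ∀ a'' ∈ G.infoA i j,
    G.uDiamondAct i j a' (G.rho i j β βt) < G.uDiamondAct i j a'' (G.rho i j β βt) →
    β i j a' = 0) ∧
  (∀ (i : Fin G.n) (j : ℕ), j < G.m i → ∀ a' ∈ G.infoA i j, ∀ a'' ∈ G.infoA i j,
    G.uCond i j a' (G.rho i j β βt) μ < G.uCond i j a'' (G.rho i j β βt) μ →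
    βt i j a' = 0) ∧
  G.IsBelief μ ∧ G.YConsistent β μ

/-- `(β, μ)` is a semi-sequential equilibrium. -/
def SemiSeqEq (β : G.Profile) (μ : G.Belief) : Prop :=
  G.IsBehProfile β ∧ G.IsBelief μ ∧ G.SelfIndep β μ ∧
  ∀ (i : Fin G.n) (j : ℕ), j < G.m i → ∀ a' ∈ G.infoA i j, ∀ a'' ∈ G.infoA i j,
    G.uCond i j a' β μ < G.uCond i j a'' β μ → β i j a' = 0

/-- `(β, μ)` is a subgame perfect semi-sequential equilibrium. -/
def SubgameSemiSeqEq (β : G.Profile) (μ : G.Belief) : Prop :=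
  G.IsBehProfile β ∧ G.IsBelief μ ∧ G.YConsistent β μ ∧
  ∀ (i : Fin G.n) (j : ℕ), j < G.m i → ∀ a' ∈ G.infoA i j, ∀ a'' ∈ G.infoA i j,
    G.uCond i j a' β μ < G.uCond i j a'' β μ → β i j a' = 0

/-- `d(I_i^j)`: the number of information sets of player `i` containing a prefix of some
history of `I_i^j` (counting `I_i^j` itself). -/
def dInfo (i : Fin G.n) (j : ℕ) : ℕ :=
  ((Finset.range (G.m i)).filter
    (fun q => ∃ h ∈ G.Info i j, ∃ p : List ℕ, p <+: h ∧ p ∈ G.Info i q)).card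

end EFG

/-!
Let two players act at each information set `I_i^j`: the mover picks a distribution on the actions
and a fictitious player picks a belief. Against a fixed point `x`, the mover maximises the
linear functional given by the conditional payoffs of the actions, and the fictitious player the
linear functional `⟨Y - (∑ Y) • μ, ·⟩`. Over the simplex the first forces suboptimal actions to have
probability zero. The second forces `(∑ Y) • μ = Y`: evaluating it at the normalised vector
`Y / ∑ Y` gives `‖Y / ∑ Y - μ‖² ≤ 0`. All coefficients depend continuously on `x`, also where `∑ Y`
vanishes, so such an `x` exists as the solution of a variational inequality on a product of
simplices, a fixed point of `x ↦ proj (x + F x)`.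

Brouwer's theorem comes from a volume count. If `x ↦ x + v x` retracted the ball of dimension `d`
onto its sphere, with `v` extended by zero, the polynomial `t ↦ ∫ det (t • 1 + v')` over the ball
would equal `t ^ d` times the volume of the ball for all large `t`, since `x ↦ x + t⁻¹ • v x` is
then a bijection of the ball; hence for all `t`. But at `t = 1` the integrand would vanish.
-/

section DegreeOne

open MeasureTheory Polynomial Module
open scoped NNReal

theorem integral_eval_eq_of_forall_mem {α : Type*} [MeasurableSpace α] {μ : Measure α}
    {p : α → ℝ[X]} {q : ℝ[X]} {s : Finset ℝ} (hp : ∀ x, (p x).degree < s.card)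
    (hq : q.degree < s.card) (hint : ∀ t ∈ s, Integrable (fun x ↦ (p x).eval t) μ)
    (h : ∀ t ∈ s, ∫ x, (p x).eval t ∂μ = q.eval t) (t : ℝ) :
    ∫ x, (p x).eval t ∂μ = q.eval t := by
  have lagrange (r : ℝ[X]) (hr : r.degree < s.card) :
      r.eval t = ∑ k ∈ s, r.eval k * (Lagrange.basis s id k).eval t := by
    conv_lhs => rw [Lagrange.eq_interpolate (Set.injOn_id _) hr, Lagrange.interpolate_apply]
    simp only [eval_finsetSum, eval_mul, eval_C, id]
  calc ∫ x, (p x).eval t ∂μ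
      = ∫ x, ∑ k ∈ s, (p x).eval k * (Lagrange.basis s id k).eval t ∂μ := by
        simp only [fun x ↦ lagrange (p x) (hp x)]
    _ = ∑ k ∈ s, q.eval k * (Lagrange.basis s id k).eval t := by
        rw [integral_finsetSum _ fun k hk ↦ (hint k hk).mul_const _]
        exact Finset.sum_congr rfl fun k hk ↦ by rw [integral_mul_const, h k hk]
    _ = q.eval t := (lagrange q hq).symm

variable {E : Type*} [NormedAddCommGroup E] [NormedSpace ℝ E] [FiniteDimensional ℝ E]

theorem det_one_add_pos_of_norm_lt_one {A : E →L[ℝ] E} (hA : ‖A‖ < 1) : 0 < (1 + A).det := by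
  have hcont : ContinuousOn (fun t : ℝ ↦ (1 + t • A).det) (Set.Icc 0 1) :=
    (ContinuousLinearMap.continuous_det.comp (by fun_prop)).continuousOn
  have hne : ∀ t ∈ Set.Icc (0 : ℝ) 1, (1 + t • A).det ≠ 0 := by
    intro t ht
    have hlt : ‖-(t • A)‖ < 1 := by
      rw [norm_neg, norm_smul, Real.norm_of_nonneg ht.1]
      exact (mul_le_of_le_one_left (norm_nonneg A) ht.2).trans_lt hA
    have hunit : IsUnit (1 + t • A) := by simpa using isUnit_one_sub_of_norm_lt_one hlt
    exact (hunit.map ContinuousLinearMap.toLinearMapRingHom).map LinearMap.det |>.ne_zero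
  by_contra! hneg
  obtain ⟨t, ht, hdet⟩ := intermediate_value_Icc' zero_le_one hcont
    (show (0 : ℝ) ∈ _ by simpa [ContinuousLinearMap.det] using hneg)
  exact hne t ht hdet

theorem bijective_id_add_of_lipschitzWith_lt_one {v : E → E} {K : ℝ≥0} (hv : LipschitzWith K v)
    (hK : K < 1) : Function.Bijective fun x ↦ x + v x := by
  have happrox : ApproximatesLinearOn (fun x ↦ x + v x)
      (ContinuousLinearEquiv.refl ℝ E : E →L[ℝ] E) Set.univ K := by
    intro x _ y _
    simpa [add_sub_add_comm] using hv.norm_sub_le x y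
  have hK' : Subsingleton E ∨
      K < ‖((ContinuousLinearEquiv.refl ℝ E).symm : E →L[ℝ] E)‖₊⁻¹ := by
    refine (subsingleton_or_nontrivial E).imp_right fun _ : Nontrivial E ↦ ?_
    have hnorm : ‖((ContinuousLinearEquiv.refl ℝ E).symm : E →L[ℝ] E)‖₊ = 1 :=
      NNReal.eq ContinuousLinearMap.norm_id
    rwa [hnorm, inv_one]
  exact ⟨Set.injOn_univ.1 (happrox.injOn hK'), happrox.surjective hK'⟩

theorem eval_charpoly_neg_eq_det (A : E →L[ℝ] E) (t : ℝ) :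
    (-(A : E →ₗ[ℝ] E)).charpoly.eval t = (t • 1 + A).det := by
  rw [LinearMap.eval_charpoly, sub_neg_eq_add]
  rfl

variable [MeasurableSpace E] [BorelSpace E] {μ : Measure E} [μ.IsAddHaarMeasure]
  {v : E → E} {s : Set E} {K : ℝ≥0}

theorem setIntegral_det_one_add_fderiv_of_lt_one (hv : LipschitzWith K v) (hK : K < 1)
    (hs : MeasurableSet s) (hμs : μ s ≠ ⊤) (hd : ∀ x ∈ s, DifferentiableAt ℝ v x)
    (h0 : ∀ x ∉ s, v x = 0) :
    IntegrableOn (fun x ↦ (1 + fderiv ℝ v x).det) s μ ∧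
      ∫ x in s, (1 + fderiv ℝ v x).det ∂μ = μ.real s := by
  have hbij := bijective_id_add_of_lipschitzWith_lt_one hv hK
  have himage : (fun x ↦ x + v x) '' s = s := by
    have hcompl : (fun x ↦ x + v x) '' sᶜ = sᶜ := by
      rw [Set.image_congr fun x hx ↦ show x + v x = id x by simp [h0 x hx], Set.image_id]
    rwa [Set.image_compl_eq hbij, compl_inj_iff] at hcompl
  have hderiv : ∀ x ∈ s, HasFDerivWithinAt (fun x ↦ x + v x) (1 + fderiv ℝ v x) s x :=
    fun x hx ↦ ((hasFDerivAt_id x).add (hd x hx).hasFDerivAt).hasFDerivWithinAt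
  have hpos (x : E) : 0 < (1 + fderiv ℝ v x).det :=
    det_one_add_pos_of_norm_lt_one <| (norm_fderiv_le_of_lipschitz ℝ hv).trans_lt hK
  have hint := integrableOn_image_iff_integrableOn_abs_det_fderiv_smul μ hs hderiv
    hbij.injective.injOn fun _ ↦ (1 : ℝ)
  have hval := integral_image_eq_integral_abs_det_fderiv_smul μ hs hderiv
    hbij.injective.injOn fun _ ↦ (1 : ℝ)
  simp only [himage, abs_of_pos (hpos _), smul_eq_mul, mul_one] at hint hval
  exact ⟨hint.1 (integrableOn_const hμs), by simp [← hval]⟩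

theorem setIntegral_det_smul_one_add_fderiv_of_lt {t : ℝ} (hv : LipschitzWith K v) (ht : K < t)
    (hs : MeasurableSet s) (hμs : μ s ≠ ⊤) (hd : ∀ x ∈ s, DifferentiableAt ℝ v x)
    (h0 : ∀ x ∉ s, v x = 0) :
    IntegrableOn (fun x ↦ (t • 1 + fderiv ℝ v x).det) s μ ∧
      ∫ x in s, (t • 1 + fderiv ℝ v x).det ∂μ = t ^ finrank ℝ E * μ.real s := by
  have ht0 : 0 < t := K.coe_nonneg.trans_lt ht
  have hdet (x : E) : (t • 1 + fderiv ℝ v x).det =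
      t ^ finrank ℝ E * (1 + fderiv ℝ (t⁻¹ • v) x).det := by
    have hfactor : t • 1 + fderiv ℝ v x = t • (1 + fderiv ℝ (t⁻¹ • v) x) := by
      rw [fderiv_const_smul_field, smul_add, Pi.smul_apply, smul_inv_smul₀ ht0.ne']
    rw [hfactor]
    exact LinearMap.det_smul _ _
  have hlt : ‖t⁻¹‖₊ * K < 1 := by
    rw [← NNReal.coe_lt_coe]
    simpa [abs_of_pos ht0, inv_mul_lt_one₀ ht0] using ht
  obtain ⟨hint, hval⟩ := setIntegral_det_one_add_fderiv_of_lt_one (μ := μ)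
    ((lipschitzWith_smul t⁻¹).comp hv) hlt hs hμs
    (fun x hx ↦ (hd x hx).const_smul t⁻¹) (fun x hx ↦ by simp [h0 x hx])
  simp only [hdet]
  refine ⟨hint.const_mul _, ?_⟩
  rw [integral_const_mul]
  exact congrArg (_ * ·) hval

theorem setIntegral_det_one_add_fderiv (hv : LipschitzWith K v) (hs : MeasurableSet s)
    (hμs : μ s ≠ ⊤) (hd : ∀ x ∈ s, DifferentiableAt ℝ v x) (h0 : ∀ x ∉ s, v x = 0) :
    ∫ x in s, (1 + fderiv ℝ v x).det ∂μ = μ.real s := by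
  obtain ⟨T, hT, hcard⟩ :=
    (Set.Ioi_infinite (K : ℝ)).exists_subset_card_eq (finrank ℝ E + 1)
  let p (x : E) : ℝ[X] := (-(fderiv ℝ v x : E →ₗ[ℝ] E)).charpoly
  let q : ℝ[X] := C (μ.real s) * X ^ finrank ℝ E
  have hp (x : E) : (p x).degree < T.card := by
    rw [hcard, degree_eq_natDegree (LinearMap.charpoly_monic _).ne_zero,
      LinearMap.charpoly_natDegree]
    exact_mod_cast Nat.lt_succ_self _
  have hq : q.degree < T.card :=
    (degree_C_mul_X_pow_le _ _).trans_lt (by rw [hcard]; exact_mod_cast Nat.lt_succ_self _)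
  have hlarge : ∀ t ∈ T, IntegrableOn (fun x ↦ (p x).eval t) s μ ∧
      ∫ x in s, (p x).eval t ∂μ = q.eval t := by
    intro t ht
    simpa only [p, q, eval_charpoly_neg_eq_det, eval_mul, eval_C, eval_pow, eval_X,
      mul_comm (μ.real s)] using setIntegral_det_smul_one_add_fderiv_of_lt hv (hT ht) hs hμs hd h0
  have hone := integral_eval_eq_of_forall_mem hp hq (fun t ht ↦ (hlarge t ht).1)
    (fun t ht ↦ (hlarge t ht).2) 1
  simpa [p, q, eval_charpoly_neg_eq_det] using hone

end DegreeOne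

section NoRetraction

open Metric MeasureTheory
open scoped NNReal RealInnerProductSpace

theorem inter_frontier_nonempty_of_isPreconnected {X : Type*} [TopologicalSpace X] {s t : Set X}
    (ht : IsPreconnected t) (hts : (t ∩ s).Nonempty) (htsc : (t \ s).Nonempty) :
    (t ∩ frontier s).Nonempty := by
  by_contra! hempty
  have hnot : ∀ x ∈ t, x ∉ frontier s := fun x hx hxs ↦ hempty.subset ⟨hx, hxs⟩
  have hcover : t ⊆ interior s ∪ (closure s)ᶜ := by
    intro x hx
    by_contra! hx'
    simp only [Set.mem_union, Set.mem_compl_iff, not_or, not_not] at hx'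
    exact hnot x hx ⟨hx'.2, hx'.1⟩
  obtain ⟨x, hxt, hxs⟩ := hts
  obtain ⟨y, hyt, hys⟩ := htsc
  have hx : x ∈ interior s := by
    by_contra hxi
    exact hnot x hxt ⟨subset_closure hxs, hxi⟩
  have hy : y ∉ closure s := fun hyc ↦ hnot y hyt ⟨hyc, fun hyi ↦ hys (interior_subset hyi)⟩
  obtain ⟨z, -, hzi, hzc⟩ := ht _ _ isOpen_interior isClosed_closure.isOpen_compl hcover
    ⟨x, hxt, hx⟩ ⟨y, hyt, hy⟩
  exact hzc (interior_subset_closure hzi)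

theorem lipschitzWith_indicator {E F : Type*} [SeminormedAddCommGroup E] [NormedSpace ℝ E]
    [SeminormedAddCommGroup F] {v : E → F} {s : Set E} {K : ℝ≥0} (hv : LipschitzOnWith K v s)
    (hs : IsClosed s) (h0 : ∀ x ∈ frontier s, v x = 0) : LipschitzWith K (s.indicator v) := by
  have hcross : ∀ x ∈ s, ∀ y ∉ s, ‖v x‖ ≤ K * dist x y := by
    intro x hx y hy
    obtain ⟨z, hzseg, hz⟩ := inter_frontier_nonempty_of_isPreconnected
      (convex_segment (𝕜 := ℝ) x y).isPreconnected ⟨x, left_mem_segment ℝ x y, hx⟩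
      ⟨y, right_mem_segment ℝ x y, hy⟩
    calc ‖v x‖ = dist (v x) (v z) := by rw [h0 z hz, dist_zero_right]
      _ ≤ K * dist x z := hv.dist_le_mul x hx z (hs.frontier_subset hz)
      _ ≤ K * dist x y := by
        gcongr
        linarith [dist_add_dist_of_mem_segment hzseg, dist_nonneg (x := z) (y := y)]
  refine LipschitzWith.of_dist_le_mul fun x y ↦ ?_
  by_cases hx : x ∈ s <;> by_cases hy : y ∈ s
  · simpa [hx, hy] using hv.dist_le_mul x hx y hy
  · simpa [hx, hy] using hcross x hx y hy
  · simpa [hx, hy, dist_comm x y] using hcross y hy x hx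
  · simp only [Set.indicator_of_notMem hx, Set.indicator_of_notMem hy, dist_self]
    positivity

variable {E : Type*} [NormedAddCommGroup E] [InnerProductSpace ℝ E] [FiniteDimensional ℝ E]

theorem det_fderiv_eq_zero_of_eventually_norm_eq {N : E → E} {x : E} {R : ℝ}
    (hN : DifferentiableAt ℝ N x) (hR : R ≠ 0) (h : ∀ᶠ y in nhds x, ‖N y‖ = R) :
    (fderiv ℝ N x).det = 0 := by
  by_contra hne
  obtain ⟨w, hw⟩ := (LinearMap.equivOfDetNeZero _ hne).surjective (N x)
  replace hw : fderiv ℝ N x w = N x := hw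
  have hconst : (fun y ↦ ‖N y‖ ^ 2) =ᶠ[nhds x] fun _ ↦ R ^ 2 := h.mono fun y hy ↦ by simp [hy]
  have hderiv := hN.hasFDerivAt.norm_sq.unique
    ((hasFDerivAt_const (R ^ 2) x).congr_of_eventuallyEq hconst)
  have hzero : 2 * ⟪N x, fderiv ℝ N x w⟫ = 0 := by simpa using DFunLike.congr_fun hderiv w
  rw [hw, real_inner_self_eq_norm_sq, h.self_of_nhds] at hzero
  exact hR (by simpa using hzero)

theorem not_mapsTo_closedBall_sphere {N : E → E} {R : ℝ} (hN : ContDiff ℝ 1 N) (hR : 0 < R)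
    (hid : ∀ x ∈ sphere (0 : E) R, N x = x) : ¬ Set.MapsTo N (closedBall 0 R) (sphere 0 R) := by
  intro hmaps
  borelize E
  let v : E → E := (closedBall 0 R).indicator fun x ↦ N x - x
  obtain ⟨K, hK⟩ := (hN.sub contDiff_id).contDiffOn.exists_lipschitzOnWith one_ne_zero
    (convex_closedBall (0 : E) R) (isCompact_closedBall 0 R)
  have hv : LipschitzWith K v := lipschitzWith_indicator hK isClosed_closedBall fun x hx ↦ by
    rw [frontier_closedBall _ hR.ne'] at hx
    exact sub_eq_zero.2 (hid x hx)
  have hv_eq {x : E} (hx : x ∈ ball 0 R) : v =ᶠ[nhds x] fun y ↦ N y - y := by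
    filter_upwards [isOpen_ball.mem_nhds hx] with y hy
    exact Set.indicator_of_mem (ball_subset_closedBall hy) _
  have hv_zero : ∀ x ∉ ball (0 : E) R, v x = 0 := by
    intro x hx
    refine Set.indicator_apply_eq_zero.2 fun hxc ↦ sub_eq_zero.2 (hid x ?_)
    exact le_antisymm hxc (not_lt.1 hx)
  have hdiff (x : E) : DifferentiableAt ℝ N x := hN.differentiable one_ne_zero x
  have hdet : ∀ x ∈ ball (0 : E) R, (1 + fderiv ℝ v x).det = 0 := by
    intro x hx
    have hfderiv : 1 + fderiv ℝ v x = fderiv ℝ N x := by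
      rw [(hv_eq hx).fderiv_eq, fderiv_fun_sub (hdiff x) differentiableAt_fun_id, fderiv_fun_id]
      exact add_sub_cancel _ _
    rw [hfderiv]
    refine det_fderiv_eq_zero_of_eventually_norm_eq (hdiff x) hR.ne' ?_
    filter_upwards [isOpen_ball.mem_nhds hx] with y hy
    exact mem_sphere_zero_iff_norm.1 (hmaps (ball_subset_closedBall hy))
  have hvol : volume.real (ball (0 : E) R) = 0 := by
    rw [← setIntegral_det_one_add_fderiv hv measurableSet_ball measure_ball_lt_top.ne
      (fun x hx ↦ ((hdiff x).sub differentiableAt_id).congr_of_eventuallyEq (hv_eq hx)) hv_zero,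
      setIntegral_eq_zero_of_forall_eq_zero hdet]
  exact (measure_ball_pos volume (0 : E) hR).ne'
    ((measureReal_eq_zero_iff measure_ball_lt_top.ne).1 hvol)

end NoRetraction

section Brouwer

open Metric

variable {E : Type*} [NormedAddCommGroup E] [InnerProductSpace ℝ E] [FiniteDimensional ℝ E]
  {f : E → E} {C : ℝ}

theorem exists_isFixedPt_of_contDiff_of_norm_le (hf : ContDiff ℝ 1 f) (hb : ∀ x, ‖f x‖ ≤ C) :
    ∃ x, Function.IsFixedPt f x := by
  by_contra! hfix
  have hC : 0 ≤ C := (norm_nonneg _).trans (hb 0)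
  let χ : ContDiffBump (0 : E) := ⟨C + 1, C + 2, by positivity, by linarith⟩
  let H (x : E) : E := x - χ x • f x
  have hH : ContDiff ℝ 1 H := contDiff_id.sub (χ.contDiff.smul hf)
  have hH_ne (x : E) : H x ≠ 0 := by
    intro hx
    have hx_eq : x = χ x • f x := sub_eq_zero.1 hx
    have hx_le : ‖x‖ ≤ C := by
      rw [hx_eq, norm_smul, Real.norm_of_nonneg χ.nonneg]
      exact (mul_le_of_le_one_left (norm_nonneg _) χ.le_one).trans (hb x)
    rw [χ.one_of_mem_closedBall (by simpa using hx_le.trans (by linarith)), one_smul] at hx_eq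
    exact hfix x hx_eq.symm
  have hH_sphere : ∀ x ∈ sphere (0 : E) (C + 2), H x = x := by
    intro x hx
    simp [H, χ.zero_of_le_dist (mem_sphere.1 hx).ge]
  refine not_mapsTo_closedBall_sphere (N := fun x ↦ ((C + 2) / ‖H x‖) • H x) (R := C + 2)
    ((contDiff_const.div (hH.norm ℝ hH_ne) fun x ↦ norm_ne_zero_iff.2 (hH_ne x)).smul hH)
    (by positivity) ?_ ?_
  · intro x hx
    rw [hH_sphere x hx, mem_sphere_zero_iff_norm.1 hx, div_self (by positivity), one_smul]
  · intro x _
    rw [mem_sphere_zero_iff_norm, norm_smul, Real.norm_of_nonneg (by positivity),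
      div_mul_cancel₀ _ (norm_ne_zero_iff.2 (hH_ne x))]

theorem exists_isFixedPt_of_continuous_of_norm_le (hf : Continuous f) (hb : ∀ x, ‖f x‖ ≤ C) :
    ∃ x, Function.IsFixedPt f x := by
  have hC : 0 ≤ C := (norm_nonneg _).trans (hb 0)
  have happrox : ∀ ε > 0, ε ≤ 1 → ∃ x ∈ closedBall (0 : E) (C + 1), dist (f x) x < ε := by
    intro ε hε hε1
    obtain ⟨g, hg, hgf, -⟩ :=
      hf.exists_contDiff_approx 1 (continuous_const (y := ε)) fun _ ↦ hε
    have hgb (x : E) : ‖g x‖ ≤ C + 1 := by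
      linarith [norm_le_norm_add_norm_sub' (g x) (f x), hb x, hgf x, dist_eq_norm (g x) (f x)]
    obtain ⟨x, hx⟩ := exists_isFixedPt_of_contDiff_of_norm_le (by exact_mod_cast hg) hgb
    have hdist := hgf x
    rw [hx.eq, dist_comm] at hdist
    exact ⟨x, by simpa [hx.eq] using hgb x, hdist⟩
  obtain ⟨x₀, -, hmin⟩ := (isCompact_closedBall (0 : E) (C + 1)).exists_isMinOn
    ⟨0, mem_closedBall_self (by positivity)⟩ (hf.dist continuous_id).continuousOn
  refine ⟨x₀, dist_le_zero.1 ?_⟩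
  by_contra! hpos
  obtain ⟨x, hx, hlt⟩ := happrox _ (lt_min hpos one_pos) (min_le_right _ _)
  exact ((hmin hx).trans_lt (hlt.trans_le (min_le_left _ _))).false

end Brouwer

section VariationalInequality

open scoped RealInnerProductSpace

theorem exists_lipschitzWith_one_inner_sub_nonpos {E : Type*} [NormedAddCommGroup E]
    [InnerProductSpace ℝ E] {K : Set E} (hne : K.Nonempty) (hK : IsComplete K)
    (hconv : Convex ℝ K) :
    ∃ P : E → E, LipschitzWith 1 P ∧ ∀ x, P x ∈ K ∧ ∀ y ∈ K, ⟪x - P x, y - P x⟫ ≤ 0 := by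
  choose P hPK hPmin using exists_norm_eq_iInf_of_complete_convex hne hK hconv
  have hP (x : E) : ∀ y ∈ K, ⟪x - P x, y - P x⟫ ≤ 0 :=
    (norm_eq_iInf_iff_real_inner_le_zero hconv (hPK x)).1 (hPmin x)
  refine ⟨P, LipschitzWith.of_dist_le_mul fun x y ↦ ?_, fun x ↦ ⟨hPK x, hP x⟩⟩
  have hsq : ‖P x - P y‖ ^ 2 ≤ ⟪x - y, P x - P y⟫ := by
    have hsum := add_nonpos (hP x (P y) (hPK y)) (hP y (P x) (hPK x))
    rw [← real_inner_self_eq_norm_sq]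
    simp only [inner_sub_left, inner_sub_right] at hsum ⊢
    linarith
  rw [NNReal.coe_one, one_mul, dist_eq_norm, dist_eq_norm]
  nlinarith [real_inner_le_norm (x - y) (P x - P y), norm_nonneg (P x - P y), norm_nonneg (x - y)]

theorem exists_mem_forall_inner_sub_nonpos {E : Type*} [NormedAddCommGroup E]
    [InnerProductSpace ℝ E] [FiniteDimensional ℝ E] {K : Set E} {F : E → E} (hne : K.Nonempty)
    (hK : IsCompact K) (hconv : Convex ℝ K) (hF : ContinuousOn F K) :
    ∃ x ∈ K, ∀ y ∈ K, ⟪F x, y - x⟫ ≤ 0 := by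
  obtain ⟨P, hP, hPK⟩ := exists_lipschitzWith_one_inner_sub_nonpos hne hK.isComplete hconv
  have hcont : ContinuousOn (fun x ↦ x + F x) K := continuousOn_id.add hF
  obtain ⟨C, hC⟩ := hK.exists_bound_of_continuousOn hcont
  obtain ⟨x, hx⟩ := exists_isFixedPt_of_continuous_of_norm_le
    (hcont.comp_continuous hP.continuous fun x ↦ (hPK x).1) fun x ↦ hC _ (hPK x).1
  have hFx : x - P x = F (P x) := sub_eq_iff_eq_add'.2 hx.eq.symm
  exact ⟨P x, (hPK x).1, hFx ▸ (hPK x).2⟩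

theorem exists_mem_forall_dual_apply_sub_nonpos {E : Type*} [AddCommGroup E] [Module ℝ E]
    [TopologicalSpace E] [IsTopologicalAddGroup E] [ContinuousSMul ℝ E] [T2Space E]
    [FiniteDimensional ℝ E] {K : Set E} {F : E → Module.Dual ℝ E} (hne : K.Nonempty)
    (hK : IsCompact K) (hconv : Convex ℝ K) (hF : ∀ v, ContinuousOn (fun x ↦ F x v) K) :
    ∃ x ∈ K, ∀ y ∈ K, F x (y - x) ≤ 0 := by
  let e : E ≃L[ℝ] EuclideanSpace ℝ (Fin (Module.finrank ℝ E)) := toEuclidean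
  let b := EuclideanSpace.basisFun (Fin (Module.finrank ℝ E)) ℝ
  let F' (x : E) : EuclideanSpace ℝ (Fin (Module.finrank ℝ E)) := ∑ k, F x (e.symm (b k)) • b k
  have hinner (x v : E) : ⟪F' x, e v⟫ = F x v := by
    conv_rhs => rw [← e.symm_apply_apply v, ← b.sum_repr' (e v)]
    simp [F', sum_inner, inner_smul_left, mul_comm]
  have hF' : ContinuousOn (F' ∘ e.symm) (e '' K) := by
    have hcont : ContinuousOn F' K :=
      continuousOn_finsetSum _ fun k _ ↦ (hF (e.symm (b k))).smul continuousOn_const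
    refine hcont.comp e.symm.continuous.continuousOn ?_
    rintro _ ⟨x, hx, rfl⟩
    simpa using hx
  obtain ⟨_, ⟨x, hx, rfl⟩, hsol⟩ := exists_mem_forall_inner_sub_nonpos (hne.image e)
    (hK.image e.continuous) (hconv.linear_image e.toLinearMap) hF'
  refine ⟨x, hx, fun y hy ↦ ?_⟩
  simpa [← map_sub, hinner] using hsol (e y) ⟨y, hy, rfl⟩

theorem exists_forall_mem_forall_dual_apply_sub_nonpos {ι : Type*} [Finite ι] {E : ι → Type*}
    [∀ i, AddCommGroup (E i)] [∀ i, Module ℝ (E i)] [∀ i, TopologicalSpace (E i)]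
    [∀ i, IsTopologicalAddGroup (E i)] [∀ i, ContinuousSMul ℝ (E i)] [∀ i, T2Space (E i)]
    [∀ i, FiniteDimensional ℝ (E i)] {K : ∀ i, Set (E i)}
    {F : (∀ i, E i) → ∀ i, Module.Dual ℝ (E i)} (hne : ∀ i, (K i).Nonempty)
    (hK : ∀ i, IsCompact (K i)) (hconv : ∀ i, Convex ℝ (K i))
    (hF : ∀ i v, ContinuousOn (fun x ↦ F x i v) (Set.univ.pi K)) :
    ∃ x, ∀ i, x i ∈ K i ∧ ∀ y ∈ K i, F x i (y - x i) ≤ 0 := by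
  cases nonempty_fintype ι
  let Φ (x : ∀ i, E i) : Module.Dual ℝ (∀ i, E i) := ∑ i, F x i ∘ₗ LinearMap.proj i
  have hΦ (x v : ∀ i, E i) : Φ x v = ∑ i, F x i (v i) := by simp [Φ]
  obtain ⟨x, hx, hsol⟩ := exists_mem_forall_dual_apply_sub_nonpos (F := Φ)
    (Set.univ_pi_nonempty_iff.2 hne) (isCompact_univ_pi hK) (convex_pi fun i _ ↦ hconv i)
    (fun v ↦ by simpa only [hΦ] using continuousOn_finsetSum _ fun i _ ↦ hF i (v i))
  refine ⟨x, fun i ↦ ⟨hx i trivial, fun y hy ↦ ?_⟩⟩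
  have hupdate : Function.update x i y ∈ Set.univ.pi K := fun j _ ↦ by
    rcases eq_or_ne j i with rfl | hj
    · simpa using hy
    · simpa [hj] using hx j trivial
  have hsingle : Φ x (Function.update x i y - x) = F x i (y - x i) := by
    rw [hΦ, Fintype.sum_eq_single i fun j hj ↦ by simp [hj]]
    simp
  exact hsingle ▸ hsol _ hupdate

end VariationalInequality

section StdSimplex

open scoped Matrix

variable {α : Type*} [Fintype α] {x : α → ℝ}

theorem apply_eq_zero_of_lt_of_forall_dotProduct_sub_nonpos {c : α → ℝ} {a b : α}
    (hx : x ∈ stdSimplex ℝ α) (hmax : ∀ y ∈ stdSimplex ℝ α, c ⬝ᵥ (y - x) ≤ 0)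
    (hab : c a < c b) : x a = 0 := by
  have hshift : x + x a • (Pi.single b 1 - Pi.single a 1) ∈ stdSimplex ℝ α := by
    refine ⟨fun k ↦ ?_, ?_⟩
    · have hsingle : (0 : α → ℝ) ≤ Pi.single b 1 := Pi.single_nonneg.2 zero_le_one
      have hb : 0 ≤ x a * (Pi.single b 1 : α → ℝ) k := mul_nonneg (hx.1 a) (hsingle k)
      rcases eq_or_ne k a with rfl | hka
      · simpa [mul_sub] using hb
      · simpa [hka] using add_nonneg (hx.1 k) hb
    · simp [Finset.sum_add_distrib, ← Finset.mul_sum, hx.2]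
  have hgain : x a * (c b - c a) ≤ 0 := by
    simpa [dotProduct_smul, dotProduct_sub] using hmax _ hshift
  exact le_antisymm (nonpos_of_mul_nonpos_left hgain (sub_pos.2 hab)) (hx.1 a)

theorem sum_smul_eq_of_forall_dotProduct_sub_nonpos {w : α → ℝ} (hw : 0 ≤ w)
    (hmax : ∀ y ∈ stdSimplex ℝ α, (w - (∑ a, w a) • x) ⬝ᵥ (y - x) ≤ 0) :
    (∑ a, w a) • x = w := by
  generalize hW : ∑ a, w a = W at hmax ⊢
  have hW0 : 0 ≤ W := hW ▸ Finset.sum_nonneg fun a _ ↦ hw a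
  rcases hW0.eq_or_lt with rfl | hpos
  · have hw0 : w = 0 := funext fun a ↦
      (Finset.sum_eq_zero_iff_of_nonneg fun a _ ↦ hw a).1 hW a (Finset.mem_univ a)
    rw [hw0, zero_smul]
  · have hy : W⁻¹ • w ∈ stdSimplex ℝ α :=
      ⟨fun a ↦ mul_nonneg (inv_nonneg.2 hpos.le) (hw a), by
        simp [← Finset.mul_sum, hW, hpos.ne']⟩
    have hc : w - W • x = W • (W⁻¹ • w - x) := by rw [smul_sub, smul_inv_smul₀ hpos.ne']
    have hsq := hmax _ hy
    rw [hc, smul_dotProduct, smul_eq_mul] at hsq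
    have hzero : W⁻¹ • w - x = 0 := dotProduct_self_eq_zero.1 <|
      le_antisymm (nonpos_of_mul_nonpos_right hsq hpos) (dotProduct_self_star_nonneg _)
    rw [← sub_eq_zero.1 hzero, smul_inv_smul₀ hpos.ne']

end StdSimplex

namespace EFG

section Continuity

variable {G : EFG} {X : Type*} [TopologicalSpace X] {β : X → G.Profile}

@[fun_prop]
theorem continuous_moveProb (hβ : Continuous β) (h : List ℕ) (a : ℕ) :
    Continuous fun x ↦ G.moveProb (β x) h a := by
  unfold moveProb
  cases G.P h <;> simp only [Option.elim_none, Option.elim_some] <;> fun_prop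

@[fun_prop]
theorem continuous_prodAlong (hβ : Continuous β) (pre rest : List ℕ) :
    Continuous fun x ↦ G.prodAlong (β x) pre rest := by
  induction rest generalizing pre with
  | nil => exact continuous_const
  | cons b rest ih => exact (continuous_moveProb hβ pre b).mul (ih _)

@[fun_prop]
theorem continuous_prodAlongNot (hβ : Continuous β) (i : Fin G.n) (pre rest : List ℕ) :
    Continuous fun x ↦ G.prodAlongNot i (β x) pre rest := by
  induction rest generalizing pre with
  | nil => exact continuous_const
  | cons b rest ih =>
    unfold prodAlongNot
    split_ifs
    · exact continuous_const.mul (ih _)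
    · exact (continuous_moveProb hβ pre b).mul (ih _)

theorem continuous_nuAux (hβ : Continuous β) {w : X → List ℕ → ℝ} (hw : Continuous w)
    (i : Fin G.n) (j : ℕ) (pre rest : List ℕ) :
    Continuous fun x ↦ G.nuAux i j (β x) (w x) pre rest := by
  induction rest generalizing pre with
  | nil => exact continuous_const
  | cons b rest ih =>
    unfold nuAux
    split_ifs
    · fun_prop
    · exact ih _

@[fun_prop]
theorem continuous_uCond (hβ : Continuous β) {μ : X → G.Belief} (hμ : Continuous μ)
    (i : Fin G.n) (j a : ℕ) : Continuous fun x ↦ G.uCond i j a (β x) (μ x) :=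
  continuous_finsetSum _ fun h _ ↦
    continuous_const.mul (continuous_nuAux hβ (by fun_prop) i j [] h)

end Continuity

section Nonneg

variable (G : EFG) {β : G.Profile}

theorem moveProb_nonneg (hβ : 0 ≤ β) (h : List ℕ) (a : ℕ) : 0 ≤ G.moveProb β h a := by
  unfold moveProb
  cases G.P h with
  | none => exact G.fc_nonneg h a
  | some i => exact hβ i _ a

theorem prodAlongNot_nonneg (hβ : 0 ≤ β) (i : Fin G.n) (pre rest : List ℕ) :
    0 ≤ G.prodAlongNot i β pre rest := by
  induction rest generalizing pre with
  | nil => exact zero_le_one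
  | cons b rest ih =>
    refine mul_nonneg ?_ (ih _)
    split_ifs
    · exact zero_le_one
    · exact G.moveProb_nonneg hβ pre b

end Nonneg

variable (G : EFG)

theorem infoA_nonempty {i : Fin G.n} {j : ℕ} (hj : j < G.m i) : (G.infoA i j).Nonempty := by
  obtain ⟨h, hh⟩ := G.info_nonempty i j hj
  obtain ⟨-, -, ⟨a, ha⟩, -⟩ := (G.info_spec i j h hj).1 hh
  exact ⟨a, Finset.mem_sup.2 ⟨h, hh, Finset.mem_filter.2 ⟨G.act_mem h a ha, ha⟩⟩⟩

/-- The information sets of all players, `⟨i, j⟩` standing for `I_i^j`. -/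
abbrev InfoSet : Type := Σ i : Fin G.n, Fin (G.m i)

/-- Real weights on the actions available at an information set, paired with real weights on its
histories: the finite-dimensional space in which a local strategy and a local belief are chosen. -/
abbrev LocalWeights (p : G.InfoSet) : Type :=
  (G.infoA p.1 p.2 → ℝ) × (G.Info p.1 p.2 → ℝ)

variable {G} (x : ∀ p, G.LocalWeights p)

/-- The profile with the given local strategies; its entries at labels that name no action of an
information set are `0`. -/
def toProfile : G.Profile := fun i j a ↦
  if h : j < G.m i ∧ a ∈ G.infoA i j then (x ⟨i, j, h.1⟩).1 ⟨a, h.2⟩ else 0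

/-- The belief system with the given local beliefs; its entries at labels that name no history of
an information set are `0`. -/
def toBelief : G.Belief := fun i j h ↦
  if hh : j < G.m i ∧ h ∈ G.Info i j then (x ⟨i, j, hh.1⟩).2 ⟨h, hh.2⟩ else 0

theorem toProfile_apply (p : G.InfoSet) (a : G.infoA p.1 p.2) :
    toProfile x p.1 p.2 a = (x p).1 a :=
  dif_pos ⟨p.2.2, a.2⟩

theorem toBelief_apply (p : G.InfoSet) (h : G.Info p.1 p.2) :
    toBelief x p.1 p.2 h = (x p).2 h :=
  dif_pos ⟨p.2.2, h.2⟩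

@[fun_prop]
theorem continuous_toProfile : Continuous (toProfile (G := G)) := by
  refine continuous_pi fun i ↦ continuous_pi fun j ↦ continuous_pi fun a ↦ ?_
  unfold toProfile
  split_ifs <;> fun_prop

@[fun_prop]
theorem continuous_toBelief : Continuous (toBelief (G := G)) := by
  refine continuous_pi fun i ↦ continuous_pi fun j ↦ continuous_pi fun h ↦ ?_
  unfold toBelief
  split_ifs <;> fun_prop

/-- The payoff `u^i(a, β^{-I_i^j}, μ | I_i^j)` of each action at an information set. -/
def actionPayoff (p : G.InfoSet) (a : G.infoA p.1 p.2) : ℝ :=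
  G.uCond p.1 p.2 a (toProfile x) (toBelief x)

/-- The weight `Y^i(h|β)` of each history of an information set. -/
def historyWeight (p : G.InfoSet) (h : G.Info p.1 p.2) : ℝ := G.Yh p.1 (toProfile x) h

open scoped Matrix

/-- The linear functional on the weights at an information set whose maximum over a product of two
simplices is attained at `x p` in equilibrium. The first summand is the mover's expected payoff; the
second encodes `Y`-consistency of the belief without dividing by `∑ h, Y h`, which may vanish. -/
def incentive (p : G.InfoSet) : Module.Dual ℝ (G.LocalWeights p) :=
  (dotProductBilin ℝ ℝ (actionPayoff x p)).coprod
    (dotProductBilin ℝ ℝ (historyWeight x p - (∑ h, historyWeight x p h) • (x p).2))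

theorem incentive_apply (p : G.InfoSet) (v : G.LocalWeights p) :
    incentive x p v = actionPayoff x p ⬝ᵥ v.1 +
      (historyWeight x p - (∑ h, historyWeight x p h) • (x p).2) ⬝ᵥ v.2 :=
  rfl

theorem continuous_incentive_apply (p : G.InfoSet) (v : G.LocalWeights p) :
    Continuous fun x ↦ incentive x p v := by
  simp only [incentive_apply, dotProduct, actionPayoff, historyWeight, Yh, Pi.sub_apply,
    Pi.smul_apply, smul_eq_mul]
  fun_prop

theorem exists_incentive_equilibrium : ∃ x : ∀ p, G.LocalWeights p, ∀ p,
    x p ∈ stdSimplex ℝ (G.infoA p.1 p.2) ×ˢ stdSimplex ℝ (G.Info p.1 p.2) ∧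
    ∀ y ∈ stdSimplex ℝ (G.infoA p.1 p.2) ×ˢ stdSimplex ℝ (G.Info p.1 p.2),
      incentive x p (y - x p) ≤ 0 := by
  have hA (p : G.InfoSet) : Nonempty (G.infoA p.1 p.2) := (G.infoA_nonempty p.2.2).coe_sort
  have hI (p : G.InfoSet) : Nonempty (G.Info p.1 p.2) :=
    (G.info_nonempty p.1 p.2 p.2.2).coe_sort
  exact exists_forall_mem_forall_dual_apply_sub_nonpos
    (fun p ↦ .prod (Set.nonempty_coe_sort.1 inferInstance) (Set.nonempty_coe_sort.1 inferInstance))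
    (fun p ↦ (isCompact_stdSimplex ℝ _).prod (isCompact_stdSimplex ℝ _))
    (fun p ↦ (convex_stdSimplex ℝ _).prod (convex_stdSimplex ℝ _))
    (fun p v ↦ (continuous_incentive_apply p v).continuousOn)

variable {x}

theorem isBehProfile_toProfile (hx : ∀ p, (x p).1 ∈ stdSimplex ℝ (G.infoA p.1 p.2)) :
    G.IsBehProfile (toProfile x) := by
  intro i j hj
  have hval (a : G.infoA i j) := toProfile_apply x ⟨i, j, hj⟩ a
  refine ⟨fun a ha ↦ (hval ⟨a, ha⟩).symm ▸ (hx ⟨i, j, hj⟩).1 _, ?_⟩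
  rw [← Finset.sum_coe_sort, ← (hx ⟨i, j, hj⟩).2]
  exact Finset.sum_congr rfl fun a _ ↦ hval a

theorem isBelief_toBelief (hx : ∀ p, (x p).2 ∈ stdSimplex ℝ (G.Info p.1 p.2)) :
    G.IsBelief (toBelief x) := by
  intro i j hj
  have hval (h : G.Info i j) := toBelief_apply x ⟨i, j, hj⟩ h
  refine ⟨fun h hh ↦ (hval ⟨h, hh⟩).symm ▸ (hx ⟨i, j, hj⟩).1 _, ?_⟩
  rw [← Finset.sum_coe_sort, ← (hx ⟨i, j, hj⟩).2]
  exact Finset.sum_congr rfl fun h _ ↦ hval h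

theorem toProfile_nonneg (hx : ∀ p, 0 ≤ (x p).1) : 0 ≤ toProfile x := by
  intro i j a
  unfold toProfile
  split_ifs with h
  · exact hx ⟨i, j, h.1⟩ ⟨a, h.2⟩
  · exact le_rfl

theorem yConsistent_of_sum_smul_eq
    (hx : ∀ p, (∑ h, historyWeight x p h) • (x p).2 = historyWeight x p) :
    G.YConsistent (toProfile x) (toBelief x) := by
  intro i j hj h hh
  have hval := toBelief_apply x ⟨i, j, hj⟩ ⟨h, hh⟩
  have hsum : G.YInfo i j (toProfile x) = ∑ h, historyWeight x ⟨i, j, hj⟩ h :=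
    (Finset.sum_coe_sort _ _).symm
  rw [hsum, hval]
  exact congrFun (hx ⟨i, j, hj⟩) ⟨h, hh⟩

end EFG

open EFG Matrix in
theorem stmt14_general (G : EFG) :
    ∃ (β : G.Profile) (μ : G.Belief), G.SubgameSemiSeqEq β μ := by
  obtain ⟨x, hx⟩ := exists_incentive_equilibrium (G := G)
  have hstrategy (p : G.InfoSet) : ∀ y ∈ stdSimplex ℝ _, actionPayoff x p ⬝ᵥ (y - (x p).1) ≤ 0 :=
    fun y hy ↦ by simpa [incentive_apply] using (hx p).2 (y, (x p).2) ⟨hy, (hx p).1.2⟩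
  have hbelief (p : G.InfoSet) : (∑ h, historyWeight x p h) • (x p).2 = historyWeight x p := by
    refine sum_smul_eq_of_forall_dotProduct_sub_nonpos (fun h ↦ prodAlongNot_nonneg G
      (toProfile_nonneg fun p ↦ (hx p).1.1.1) _ _ _) fun y hy ↦ ?_
    simpa only [incentive_apply, Prod.fst_sub, Prod.snd_sub, sub_self, dotProduct_zero, zero_add]
      using (hx p).2 ((x p).1, y) ⟨(hx p).1.1, hy⟩
  refine ⟨toProfile x, toBelief x, isBehProfile_toProfile fun p ↦ (hx p).1.1,
    isBelief_toBelief fun p ↦ (hx p).1.2, yConsistent_of_sum_smul_eq hbelief, ?_⟩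
  intro i j hj a' ha' a'' ha'' hlt
  rw [toProfile_apply x ⟨i, j, hj⟩ ⟨a', ha'⟩]
  exact apply_eq_zero_of_lt_of_forall_dotProduct_sub_nonpos (hx ⟨i, j, hj⟩).1.1
    (hstrategy ⟨i, j, hj⟩) (b := ⟨a'', ha''⟩) hlt

/-- Every finite extensive-form game with perfect recall possesses a subgame perfect
semi-sequential equilibrium. -/
theorem stmt14 (G : EFG) (hPR : G.PerfectRecall) :
    ∃ (β : G.Profile) (μ : G.Belief), G.SubgameSemiSeqEq β μ :=
  stmt14_general G
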